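/- Let ε₀ > 0 and Δ > 0, and let A be an adaptive selector whose query functions and thresholds satisfy the Monotonicity assumption and the Bounded realized sensitivity assumption with bound Δ. Then the mechanism Repeated-AT_{ε₀,A} is ε₀-add-DP. -/

import Mathlib

open scoped ENNReal

noncomputable section

/-- A mechanism `M` is `ε`-add-DP: for every dataset `D` and element `x`,
with `D ∪ {x}` and `D` as the neighboring pair, the probability of every outcome
set under `M (D ∪ {x})` is at most `e^ε` times that under `M D`. -/
def AddDP {X : Type*} {O : Type*} (M : Multiset X → PMF O) (ε : ℝ) : Prop :=
  ∀ (D : Multiset X) (x : X) (S : Set O),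
    (M (x ::ₘ D)).toOuterMeasure S ≤ ENNReal.ofReal (Real.exp ε) * (M D).toOuterMeasure S

/-- A mechanism `M` is (two-sided) `ε`-DP with respect to add-remove neighbors. -/
def PureDP {X : Type*} {O : Type*} (M : Multiset X → PMF O) (ε : ℝ) : Prop :=
  ∀ (D : Multiset X) (x : X) (S : Set O),
    (M (x ::ₘ D)).toOuterMeasure S ≤ ENNReal.ofReal (Real.exp ε) * (M D).toOuterMeasure S ∧
    (M D).toOuterMeasure S ≤ ENNReal.ofReal (Real.exp ε) * (M (x ::ₘ D)).toOuterMeasure S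

/-- The `Repeated-AT` mechanism: starting from history `hist`, in each of the remaining `L`
rounds the adaptive selector `A` chooses, from the history, a query `h` on datasets and a
threshold `τ`; exponential noise `θ ~ Exp(lam)` is added to the query value and the round
outputs `⊤` (i.e. `true`) iff `h D + θ > τ`.  (Since `θ ~ Exp(lam)` is continuous,
`Pr[h D + θ > τ] = exp (-(lam * max (τ - h D) 0))`, so the round is a Bernoulli draw with
that success probability.) -/
def repeatedAT {X : Type*} (lam : ℝ) (hlam : 0 ≤ lam)
    (A : List Bool → (Multiset X → ℝ) × ℝ) :
    ℕ → Multiset X → List Bool → PMF (List Bool)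
  | 0, _, hist => PMF.pure hist
  | (L + 1), D, hist =>
      (PMF.bernoulli (Real.toNNReal (Real.exp (-(lam * max ((A hist).2 - (A hist).1 D) 0))))
        (by
          apply Real.toNNReal_le_one.mpr
          rw [← Real.exp_zero]
          exact Real.exp_le_exp.mpr (neg_nonpos.mpr
            (mul_nonneg hlam (le_max_right _ _))))).bind
        (fun b => repeatedAT lam hlam A L D (hist ++ [b]))

/-- Monotonicity assumption: for every history, adding an element to the dataset does not
decrease the query value. -/
def ATMonotone {X : Type*} (A : List Bool → (Multiset X → ℝ) × ℝ) : Prop :=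
  ∀ (h : List Bool) (x : X) (D : Multiset X), (A h).1 D ≤ (A h).1 (x ::ₘ D)

/-- Bounded realized sensitivity assumption: for every pair of add-remove neighboring
datasets and every output sequence, the query differences realized on the rounds that
output `⊤` sum to at most `Δ`. -/
def ATBoundedSens {X : Type*} (A : List Bool → (Multiset X → ℝ) × ℝ)
    (Δ : ℝ) (L : ℕ) : Prop :=
  ∀ (D : Multiset X) (x : X) (out : Fin L → Bool),
    ∑ i : Fin L,
      (if out i then
        |(A ((List.ofFn out).take i.val)).1 (x ::ₘ D) -
          (A ((List.ofFn out).take i.val)).1 D|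
      else 0) ≤ Δ

/-- Generalized claim: induction over the number of remaining rounds, with an arbitrary
starting history and an arbitrary remaining sensitivity budget `B`. -/
theorem repeatedAT_aux {X : Type*} (lam : ℝ) (hlam : 0 ≤ lam)
    (A : List Bool → (Multiset X → ℝ) × ℝ) (hmono : ATMonotone A)
    (D : Multiset X) (x : X) (S : Set (List Bool)) (L : ℕ) :
    ∀ (hist : List Bool) (B : ℝ),
    (∀ out : Fin L → Bool, ∑ i : Fin L,
      (if out i then
        |(A (hist ++ (List.ofFn out).take i.val)).1 (x ::ₘ D) -
          (A (hist ++ (List.ofFn out).take i.val)).1 D|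
      else 0) ≤ B) →
    (repeatedAT lam hlam A L (x ::ₘ D) hist).toOuterMeasure S ≤
      ENNReal.ofReal (Real.exp (lam * B)) *
        (repeatedAT lam hlam A L D hist).toOuterMeasure S := by
  induction L with
  | zero =>
    intro hist B hB
    have h0 : 0 ≤ B := by simpa using hB (fun _ => true)
    have h1 : (1 : ℝ≥0∞) ≤ ENNReal.ofReal (Real.exp (lam * B)) := by
      rw [ENNReal.one_le_ofReal]
      exact Real.one_le_exp (mul_nonneg hlam h0)
    simp only [repeatedAT]
    exact le_mul_of_one_le_left (zero_le) h1
  | succ L ih =>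
    intro hist B hB
    have hm := hmono hist x D
    set a := (A hist).1 (x ::ₘ D) with ha
    set c := (A hist).1 D with hc
    set t := (A hist).2 with ht
    have hT := ih (hist ++ [true]) (B - (a - c)) (by
      intro out
      have h := hB (Fin.cons true out)
      rw [Fin.sum_univ_succ] at h
      simp [List.ofFn_succ, ← ha, ← hc, abs_of_nonneg (sub_nonneg.2 hm)] at h
      simp only [List.append_assoc, List.singleton_append]
      linarith)
    have hF := ih (hist ++ [false]) B (by
      intro out
      have h := hB (Fin.cons false out)
      rw [Fin.sum_univ_succ] at h
      simp [List.ofFn_succ] at h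
      simp only [List.append_assoc, List.singleton_append]
      linarith)
    have hmax : max (t - a) 0 ≤ max (t - c) 0 := max_le_max (by linarith) le_rfl
    have hmax2 : max (t - c) 0 ≤ max (t - a) 0 + (a - c) := by
      apply max_le
      · linarith [le_max_left (t - a) 0]
      · linarith [le_max_right (t - a) 0]
    have hpT : ENNReal.ofReal (Real.exp (-(lam * max (t - a) 0))) *
        ENNReal.ofReal (Real.exp (lam * (B - (a - c)))) ≤
        ENNReal.ofReal (Real.exp (lam * B)) *
          ENNReal.ofReal (Real.exp (-(lam * max (t - c) 0))) := by
      rw [← ENNReal.ofReal_mul (Real.exp_nonneg _), ← ENNReal.ofReal_mul (Real.exp_nonneg _),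
        ← Real.exp_add, ← Real.exp_add]
      apply ENNReal.ofReal_le_ofReal
      apply Real.exp_le_exp.2
      nlinarith [mul_le_mul_of_nonneg_left hmax2 hlam]
    have hpF : (1 : ℝ≥0∞) - ENNReal.ofReal (Real.exp (-(lam * max (t - a) 0))) ≤
        1 - ENNReal.ofReal (Real.exp (-(lam * max (t - c) 0))) := by
      apply tsub_le_tsub_left
      apply ENNReal.ofReal_le_ofReal
      apply Real.exp_le_exp.2
      exact neg_le_neg (mul_le_mul_of_nonneg_left hmax hlam)
    simp only [repeatedAT, PMF.toOuterMeasure_bind_apply, tsum_bool, PMF.bernoulli_apply,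
      cond_true, cond_false, ENNReal.coe_sub, ENNReal.coe_one]
    simp only [← ha, ← hc, ← ht]
    change (1 - ENNReal.ofReal (Real.exp (-(lam * max (t - a) 0)))) * _ +
      ENNReal.ofReal (Real.exp (-(lam * max (t - a) 0))) * _ ≤
      _ * ((1 - ENNReal.ofReal (Real.exp (-(lam * max (t - c) 0)))) * _ +
      ENNReal.ofReal (Real.exp (-(lam * max (t - c) 0))) * _)
    rw [mul_add]
    refine add_le_add ?_ ?_
    · rw [mul_left_comm]
      exact mul_le_mul' hpF hF
    · refine (mul_le_mul' le_rfl hT).trans ?_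
      rw [← mul_assoc, ← mul_assoc]
      exact mul_le_mul' hpT le_rfl

/-- under monotonicity and bounded realized sensitivity (with bound `Δ`),
`Repeated-AT` with noise rate `ε₀ / Δ` is `ε₀`-add-DP. -/
theorem stmt8 {X : Type*} (ε₀ Δ : ℝ) (hε₀ : 0 < ε₀) (hΔ : 0 < Δ) (L : ℕ)
    (A : List Bool → (Multiset X → ℝ) × ℝ)
    (hmono : ATMonotone A) (hsens : ATBoundedSens A Δ L) :
    AddDP (fun D => repeatedAT (ε₀ / Δ) (le_of_lt (div_pos hε₀ hΔ)) A L D []) ε₀ := by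
  intro D x S
  have h := repeatedAT_aux (ε₀ / Δ) (le_of_lt (div_pos hε₀ hΔ)) A hmono D x S L [] Δ
    (by simpa using hsens D x)
  rwa [div_mul_cancel₀ _ hΔ.ne'] at h
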